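/- arXiv:2605.20552 — 2 statements merged into one kernel-verified Lean document; each statement's English description precedes it below -/
import Mathlib

section
/- Let Λ be a diagonal N×N matrix with entries 0 < λ = λ_1 ≤ λ_2 ≤ … ≤ λ_N, let x_1, …, x_T ∈ ℝ^N satisfy ‖x_t‖_2 ≤ 1 for all t, and set V_T = Λ + Σ_{t=1}^T x_t x_t^T. Let d be the effective dimension, i.e., the largest d such that (d − 1) λ_d ≤ T / log(1 + T/λ). Then log(det(V_T) / det(Λ)) ≤ 2 d log(1 + T/λ). -/
open Matrix Finset

/-- The defining set of the effective dimension: the set of `d ∈ {1, …, N}`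
such that `(d - 1) λ_d ≤ T / log (1 + T / λ₁)`, where `ev d` is the `d`-th
(1-indexed) diagonal entry of `Λ`. -/
def effDimSet (N : ℕ) (ev : ℕ → ℝ) (T : ℝ) : Set ℕ :=
  {d : ℕ | 1 ≤ d ∧ d ≤ N ∧ ((d : ℝ) - 1) * ev d ≤ T / Real.log (1 + T / ev 1)}

/-!
By Hadamard's inequality `det V ≤ ∏ V i i`, so `log (det V / det Λ) ≤ ∑ log (1 + s i / λ i)`, where
`s i = ∑ t, (x t i) ^ 2 ≥ 0` and `∑ s i ≤ T` by the bound on the norms. Each of the first `d`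
summands is at most `log (1 + T / λ 1)`. The remaining ones are bounded by `s i / λ (d + 1)`, hence
together by `T / λ (d + 1)`, and maximality of `d` says that this is at most
`d * log (1 + T / λ 1)`.
-/

section Hadamard

open scoped ComplexOrder

variable {𝕜 n : Type*} [RCLike 𝕜] [Fintype n] [DecidableEq n] {A : Matrix n n 𝕜}

theorem exists_ofReal_mul_self_mul_eq_one {a : 𝕜} (ha : 0 < a) : ∃ r : ℝ, (r : 𝕜) * r * a = 1 := by
  obtain ⟨x, hx, rfl⟩ := RCLike.pos_iff_exists_ofReal.1 ha
  refine ⟨(√x)⁻¹, ?_⟩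
  have hsq : (√x)⁻¹ * (√x)⁻¹ * x = 1 := by
    rw [← mul_inv, Real.mul_self_sqrt hx.le, inv_mul_cancel₀ hx.ne']
  exact_mod_cast hsq

theorem det_le_one_of_trace_le_card (hA : A.PosSemidef) (htr : A.trace ≤ Fintype.card n) :
    A.det ≤ 1 := by
  have hsum : ∑ i, hA.1.eigenvalues i ≤ Fintype.card n := by
    rw [hA.1.trace_eq_sum_eigenvalues] at htr
    exact_mod_cast htr
  have hprod : ∏ i, hA.1.eigenvalues i ≤ 1 :=
    calc ∏ i, hA.1.eigenvalues i
        ≤ ∏ i, Real.exp (hA.1.eigenvalues i - 1) :=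
          prod_le_prod (fun i _ => hA.eigenvalues_nonneg i) fun i _ => by
            simpa using Real.add_one_le_exp (hA.1.eigenvalues i - 1)
      _ = Real.exp (∑ i, hA.1.eigenvalues i - Fintype.card n) := by
          simp [← Real.exp_sum, sum_sub_distrib]
      _ ≤ 1 := Real.exp_le_one_iff.2 (sub_nonpos.2 hsum)
  rw [hA.1.det_eq_prod_eigenvalues]
  exact_mod_cast hprod

theorem det_le_prod_diag_of_posDef (hA : A.PosDef) : A.det ≤ ∏ i, A i i := by
  -- Rescaling `A` to `D * A * D` with unit diagonal reduces the claim to `det (D * A * D) ≤ 1`.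
  choose r hr using fun i => exists_ofReal_mul_self_mul_eq_one (hA.diag_pos (i := i))
  let c : n → 𝕜 := fun i => r i
  have hc : ∀ i, c i * c i * A i i = 1 := hr
  have hscaled : (diagonal c * A * diagonal c).PosSemidef := by
    have hstar : (diagonal c)ᴴ = diagonal c := by
      simp [diagonal_conjTranspose, c, Pi.star_def]
    simpa only [hstar] using hA.posSemidef.mul_mul_conjTranspose_same (diagonal c)
  have htr : (diagonal c * A * diagonal c).trace = Fintype.card n := by
    simp [trace, mul_right_comm _ (A _ _), hc]
  have hdet : (∏ i, c i * c i) * A.det ≤ 1 := by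
    have := det_le_one_of_trace_le_card hscaled htr.le
    rwa [det_mul, det_mul, det_diagonal, mul_right_comm, ← prod_mul_distrib] at this
  have hprod : (∏ i, c i * c i) * ∏ i, A i i = 1 := by
    simp [← prod_mul_distrib, hc]
  calc A.det = (∏ i, A i i) * ((∏ i, c i * c i) * A.det) := by
        linear_combination (-A.det) * hprod
    _ ≤ (∏ i, A i i) * 1 :=
        mul_le_mul_of_nonneg_left hdet (prod_nonneg fun i _ => hA.diag_pos.le)
    _ = ∏ i, A i i := mul_one _

theorem det_le_prod_diag_of_posSemidef (hA : A.PosSemidef) : A.det ≤ ∏ i, A i i := by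
  by_cases hdet : A.det = 0
  · rw [hdet]
    exact prod_nonneg fun i _ => hA.diag_nonneg
  · exact det_le_prod_diag_of_posDef (hA.posDef_iff_det_ne_zero.2 hdet)

end Hadamard

theorem log_det_diagonal_add_div_det_le_sum_log {n : Type*} [Fintype n] [DecidableEq n]
    {w : n → ℝ} (hw : ∀ i, 0 < w i) {A : Matrix n n ℝ} (hA : A.PosSemidef) :
    Real.log ((diagonal w + A).det / (diagonal w).det) ≤ ∑ i, Real.log (1 + A i i / w i) := by
  have hΛ : (diagonal w).PosDef := PosDef.diagonal hw
  have hV : (diagonal w + A).PosDef := hΛ.add_posSemidef hA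
  have hratio : (diagonal w + A).det / (diagonal w).det ≤ ∏ i, (1 + A i i / w i) := by
    rw [div_le_iff₀ hΛ.det_pos, det_diagonal, ← prod_mul_distrib]
    refine (det_le_prod_diag_of_posSemidef hV.posSemidef).trans_eq (prod_congr rfl fun i _ => ?_)
    rw [Matrix.add_apply, diagonal_apply_eq, add_mul, one_mul, div_mul_cancel₀ _ (hw i).ne']
  have hfactor : ∀ i, 1 + A i i / w i ≠ 0 := fun i =>
    (add_pos_of_pos_of_nonneg one_pos (div_nonneg hA.diag_nonneg (hw i).le)).ne'
  rw [← Real.log_prod fun i _ => hfactor i]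
  exact Real.log_le_log (div_pos hV.det_pos hΛ.det_pos) hratio

section LogSums

variable {ι : Type*} {S : Finset ι} {s w : ι → ℝ} {μ τ : ℝ}

theorem sum_log_one_add_div_le_card_mul_log (hμ : 0 < μ) (hw : ∀ i ∈ S, μ ≤ w i)
    (hs : ∀ i ∈ S, 0 ≤ s i) (hsτ : ∀ i ∈ S, s i ≤ τ) :
    ∑ i ∈ S, Real.log (1 + s i / w i) ≤ #S * Real.log (1 + τ / μ) := by
  rw [← nsmul_eq_mul]
  refine sum_le_card_nsmul _ _ _ fun i hi => ?_
  have hquot : 0 ≤ s i / w i := div_nonneg (hs i hi) (hμ.le.trans (hw i hi))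
  have hle : s i / w i ≤ τ / μ :=
    div_le_div₀ ((hs i hi).trans (hsτ i hi)) (hsτ i hi) hμ (hw i hi)
  exact Real.log_le_log (by linarith) (by linarith)

theorem sum_log_one_add_div_le_sum_div (hμ : 0 < μ) (hw : ∀ i ∈ S, μ ≤ w i)
    (hs : ∀ i ∈ S, 0 ≤ s i) :
    ∑ i ∈ S, Real.log (1 + s i / w i) ≤ (∑ i ∈ S, s i) / μ := by
  rw [sum_div]
  refine sum_le_sum fun i hi => ?_
  have hquot : 0 ≤ s i / w i := div_nonneg (hs i hi) (hμ.le.trans (hw i hi))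
  calc Real.log (1 + s i / w i) ≤ s i / w i := by
        linarith [Real.log_le_sub_one_of_pos (by linarith : 0 < 1 + s i / w i)]
    _ ≤ s i / μ := div_le_div_of_nonneg_left (hs i hi) hμ (hw i hi)

end LogSums

section EffectiveDimension

variable {N d : ℕ} {ev : ℕ → ℝ} {τ : ℝ}

theorem div_le_mul_log_of_succ_notMem_effDimSet (hτ : 0 ≤ τ) (hev_one : 0 < ev 1)
    (hev_succ : 0 < ev (d + 1)) (hdN : d < N) (hd : d + 1 ∉ effDimSet N ev τ) :
    τ / ev (d + 1) ≤ d * Real.log (1 + τ / ev 1) := by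
  rcases hτ.eq_or_lt with rfl | hτ
  · simp
  have hlog : 0 < Real.log (1 + τ / ev 1) := Real.log_pos (by linarith [div_pos hτ hev_one])
  have hlt : τ / Real.log (1 + τ / ev 1) < d * ev (d + 1) := by
    by_contra! hle
    exact hd ⟨by omega, hdN, by simpa using hle⟩
  rw [div_lt_iff₀ hlog] at hlt
  rw [div_le_iff₀ hev_succ]
  linarith

theorem apply_one_le_apply_succ (hev_mono : MonotoneOn ev (Set.Icc 1 N)) (i : Fin N) :
    ev 1 ≤ ev (i + 1) :=
  hev_mono ⟨le_rfl, i.pos⟩ ⟨by omega, i.2⟩ (by omega)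

theorem sum_log_one_add_div_le_mul_log_of_forall_le (hev_pos : 0 < ev 1)
    (hev_mono : MonotoneOn ev (Set.Icc 1 N)) (hd : d ∈ upperBounds (effDimSet N ev τ))
    {S : Finset (Fin N)} (hS : ∀ i ∈ S, d ≤ i) {s : Fin N → ℝ} (hs : ∀ i ∈ S, 0 ≤ s i)
    (hsum : ∑ i ∈ S, s i ≤ τ) :
    ∑ i ∈ S, Real.log (1 + s i / ev (i + 1)) ≤ d * Real.log (1 + τ / ev 1) := by
  have hτ : 0 ≤ τ := (sum_nonneg hs).trans hsum
  rcases S.eq_empty_or_nonempty with rfl | ⟨j, hj⟩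
  · rw [sum_empty]
    exact mul_nonneg d.cast_nonneg
      (Real.log_nonneg (le_add_of_nonneg_right (div_nonneg hτ hev_pos.le)))
  have hdN : d < N := (hS j hj).trans_lt j.2
  have hev_succ : 0 < ev (d + 1) := hev_pos.trans_le (apply_one_le_apply_succ hev_mono ⟨d, hdN⟩)
  calc ∑ i ∈ S, Real.log (1 + s i / ev (i + 1))
      ≤ (∑ i ∈ S, s i) / ev (d + 1) :=
        sum_log_one_add_div_le_sum_div hev_succ
          (fun i hi => hev_mono ⟨by omega, hdN⟩ ⟨by omega, i.2⟩ (by simpa using hS i hi)) hs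
    _ ≤ τ / ev (d + 1) := by gcongr
    _ ≤ d * Real.log (1 + τ / ev 1) :=
        div_le_mul_log_of_succ_notMem_effDimSet hτ hev_pos hev_succ hdN
          fun hmem => (Nat.lt_succ_self d).not_ge (hd hmem)

theorem sum_log_one_add_div_le_two_mul_mul_log (hev_pos : 0 < ev 1)
    (hev_mono : MonotoneOn ev (Set.Icc 1 N)) (hd : d ∈ upperBounds (effDimSet N ev τ))
    {s : Fin N → ℝ} (hs : ∀ i, 0 ≤ s i) (hsum : ∑ i, s i ≤ τ) :
    ∑ i, Real.log (1 + s i / ev (i + 1)) ≤ 2 * d * Real.log (1 + τ / ev 1) := by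
  have hτ : 0 ≤ τ := (sum_nonneg fun i _ => hs i).trans hsum
  have hlog : 0 ≤ Real.log (1 + τ / ev 1) :=
    Real.log_nonneg (le_add_of_nonneg_right (div_nonneg hτ hev_pos.le))
  let head : Finset (Fin N) := {i | (i : ℕ) < d}
  have hcard : #head ≤ d := by simp [head, Fin.card_filter_val_lt]
  have hhead : ∑ i ∈ head, Real.log (1 + s i / ev (i + 1)) ≤ d * Real.log (1 + τ / ev 1) :=
    calc ∑ i ∈ head, Real.log (1 + s i / ev (i + 1))
        ≤ #head * Real.log (1 + τ / ev 1) :=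
          sum_log_one_add_div_le_card_mul_log hev_pos
            (fun i _ => apply_one_le_apply_succ hev_mono i) (fun i _ => hs i)
            fun i _ => (single_le_sum (fun j _ => hs j) (mem_univ i)).trans hsum
      _ ≤ d * Real.log (1 + τ / ev 1) := by gcongr
  have htail : ∑ i ∈ headᶜ, Real.log (1 + s i / ev (i + 1)) ≤ d * Real.log (1 + τ / ev 1) :=
    sum_log_one_add_div_le_mul_log_of_forall_le hev_pos hev_mono hd (by simp [head])
      (fun i _ => hs i) ((sum_le_univ_sum_of_nonneg hs).trans hsum)
  rw [← sum_add_sum_compl head]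
  linarith

theorem log_det_ratio_le_effective_dimension_general (hev_pos : 0 < ev 1)
    (hev_mono : MonotoneOn ev (Set.Icc 1 N)) {A : Matrix (Fin N) (Fin N) ℝ} (hA : A.PosSemidef)
    (htrace : A.trace ≤ τ) (hd : IsGreatest (effDimSet N ev τ) d) :
    Real.log ((diagonal (fun i : Fin N => ev (i + 1)) + A).det /
        (diagonal fun i : Fin N => ev (i + 1)).det) ≤
      2 * d * Real.log (1 + τ / ev 1) :=
  (log_det_diagonal_add_div_det_le_sum_log
    (fun i => hev_pos.trans_le (apply_one_le_apply_succ hev_mono i)) hA).trans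
    (sum_log_one_add_div_le_two_mul_mul_log hev_pos hev_mono hd.2 (fun _ => hA.diag_nonneg) htrace)

end EffectiveDimension

section SumVecMulVec

variable {ι n : Type*} [Fintype ι]

theorem posSemidef_sum_vecMulVec_self [Finite n] (x : ι → n → ℝ) :
    (∑ t, vecMulVec (x t) (x t)).PosSemidef :=
  posSemidef_sum _ fun t _ => by simpa using posSemidef_vecMulVec_self_star (x t)

theorem trace_sum_vecMulVec_self_le_card [Fintype n] {x : ι → n → ℝ}
    (hx : ∀ t, ∑ i, x t i ^ 2 ≤ 1) :
    (∑ t, vecMulVec (x t) (x t)).trace ≤ Fintype.card ι :=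
  calc (∑ t, vecMulVec (x t) (x t)).trace = ∑ t, ∑ i, x t i ^ 2 := by
        simp [trace_sum, trace_vecMulVec, dotProduct, sq]
    _ ≤ ∑ _t : ι, (1 : ℝ) := sum_le_sum fun t _ => hx t
    _ = Fintype.card ι := by simp

end SumVecMulVec

/-- **Determinant bound via the effective dimension.**
Let `Λ` be diagonal with entries `0 < λ = λ_1 ≤ … ≤ λ_N`, let `x_1, …, x_T`
have Euclidean norm at most `1`, and let `V_T = Λ + ∑ t, x_t x_tᵀ`.  If `d` is
the effective dimension (the largest `d` with
`(d-1) λ_d ≤ T / log(1 + T/λ)`), then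
`log (det V_T / det Λ) ≤ 2 d log (1 + T/λ)`. -/
theorem log_det_ratio_le_effective_dimension
    (N T : ℕ) (hN : 1 ≤ N)
    (ev : ℕ → ℝ)
    (hev_pos : 0 < ev 1)
    (hev_mono : MonotoneOn ev (Set.Icc 1 N))
    (x : Fin T → Fin N → ℝ)
    (hx : ∀ t, ∑ i, (x t i) ^ 2 ≤ 1)
    (Λ V : Matrix (Fin N) (Fin N) ℝ)
    (hΛ : Λ = Matrix.diagonal fun i : Fin N => ev ((i : ℕ) + 1))
    (hV : V = Λ + ∑ t, Matrix.vecMulVec (x t) (x t))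
    (d : ℕ)
    (hd : IsGreatest (effDimSet N ev (T : ℝ)) d) :
    Real.log (V.det / Λ.det) ≤ 2 * d * Real.log (1 + (T : ℝ) / ev 1) := by
  subst hV hΛ
  exact log_det_ratio_le_effective_dimension_general hev_pos hev_mono
    (posSemidef_sum_vecMulVec_self x) (by simpa using trace_sum_vecMulVec_self_le_card hx) hd
end

section
/- Let Λ be a symmetric positive definite N×N matrix, let x_1, …, x_T ∈ ℝ^N, and define V_0 = Λ and V_t = V_{t−1} + x_t x_t^T for t = 1, …, T. Then Σ_{t=1}^T min(1, x_t^T V_{t−1}^{−1} x_t) ≤ 2 log(det(V_T) / det(Λ)). -/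
open Matrix Finset

/-- The regularized design matrix after `t` rounds:
`V_t = Λ + ∑_{τ < t} x_τ x_τᵀ` (so `V_0 = Λ` and `V_t = V_{t-1} + x_t x_tᵀ`,
with the rounds `0`-indexed by `Fin T`). -/
def designMatrix (N T : ℕ) (Λ : Matrix (Fin N) (Fin N) ℝ)
    (x : Fin T → Fin N → ℝ) (t : ℕ) : Matrix (Fin N) (Fin N) ℝ :=
  Λ + ∑ τ ∈ Finset.univ.filter (fun τ : Fin T => (τ : ℕ) < t),
        Matrix.vecMulVec (x τ) (x τ)

/-!
By the matrix determinant lemma each rank-one update multiplies `det V` by `1 + xᵀ V⁻¹ x`, and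
`min 1 y ≤ 2 log (1 + y)` for `y ≥ 0`. Each summand is thus at most twice the increment of
`log det V`, and these increments telescope.
-/

lemma min_one_le_two_mul_log_one_add {y : ℝ} (hy : 0 ≤ y) :
    min 1 y ≤ 2 * Real.log (1 + y) := by
  have hm : 0 ≤ min 1 y := le_min zero_le_one hy
  calc min 1 y ≤ 2 * (2 * min 1 y / (min 1 y + 2)) := by
        rw [← mul_div_assoc, le_div_iff₀ (by linarith)]
        nlinarith [min_le_left 1 y]
    _ ≤ 2 * Real.log (1 + min 1 y) := by gcongr; exact Real.le_log_one_add_of_nonneg hm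
    _ ≤ 2 * Real.log (1 + y) := by gcongr; exact min_le_right 1 y

section RankOneUpdate

variable {n R : Type*}

lemma det_add_vecMulVec [Fintype n] [DecidableEq n] [CommRing R] {A : Matrix n n R}
    (hA : IsUnit A.det) (u v : n → R) :
    (A + vecMulVec u v).det = A.det * (1 + v ⬝ᵥ A⁻¹ *ᵥ u) := by
  rw [vecMulVec_eq Unit, det_add_replicateCol_mul_replicateRow hA, det_unique (n := Unit),
    Matrix.mul_assoc, ← replicateCol_mulVec, Matrix.add_apply, one_apply_eq,
    replicateRow_mul_replicateCol_apply]

lemma posSemidef_vecMulVec_self [Finite n] [CommRing R] [PartialOrder R] [StarRing R]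
    [StarOrderedRing R] [TrivialStar R] (v : n → R) : (vecMulVec v v).PosSemidef := by
  simpa only [star_trivial] using posSemidef_vecMulVec_self_star v

lemma posDef_of_eq_add_vecMulVec_self [Finite n] [CommRing R] [PartialOrder R] [StarRing R]
    [StarOrderedRing R] [TrivialStar R] {T : ℕ} {V : ℕ → Matrix n n R} {x : Fin T → n → R}
    (hV₀ : (V 0).PosDef) (hV : ∀ t : Fin T, V (t + 1) = V t + vecMulVec (x t) (x t))
    {t : ℕ} (ht : t ≤ T) : (V t).PosDef := by
  induction t with
  | zero => exact hV₀
  | succ t ih =>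
    rw [hV ⟨t, ht⟩]
    exact (ih (Nat.le_of_succ_le ht)).add_posSemidef (posSemidef_vecMulVec_self _)

lemma min_one_le_two_mul_log_det_sub_log_det [Fintype n] [DecidableEq n] {A : Matrix n n ℝ}
    (hA : A.PosDef) (v : n → ℝ) :
    min 1 (v ⬝ᵥ A⁻¹ *ᵥ v) ≤
      2 * (Real.log (A + vecMulVec v v).det - Real.log A.det) := by
  have hy : 0 ≤ v ⬝ᵥ A⁻¹ *ᵥ v := by
    simpa only [star_trivial] using hA.inv.posSemidef.dotProduct_mulVec_nonneg v
  have hlog : Real.log (A + vecMulVec v v).det =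
      Real.log A.det + Real.log (1 + v ⬝ᵥ A⁻¹ *ᵥ v) := by
    rw [det_add_vecMulVec hA.det_pos.ne'.isUnit, Real.log_mul hA.det_pos.ne' (by positivity)]
  rw [hlog, add_sub_cancel_left]
  exact min_one_le_two_mul_log_one_add hy

theorem elliptical_potential_inequality_general [Fintype n] [DecidableEq n] {T : ℕ}
    {V : ℕ → Matrix n n ℝ} {x : Fin T → n → ℝ} (hV₀ : (V 0).PosDef)
    (hV : ∀ t : Fin T, V (t + 1) = V t + vecMulVec (x t) (x t)) :
    ∑ t : Fin T, min 1 (x t ⬝ᵥ (V t)⁻¹ *ᵥ x t) ≤ 2 * Real.log ((V T).det / (V 0).det) := by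
  have hpos {t : ℕ} (ht : t ≤ T) : (V t).PosDef := posDef_of_eq_add_vecMulVec_self hV₀ hV ht
  let logDet (t : ℕ) : ℝ := Real.log (V t).det
  calc ∑ t : Fin T, min 1 (x t ⬝ᵥ (V t)⁻¹ *ᵥ x t)
      ≤ ∑ t : Fin T, 2 * (logDet (t + 1) - logDet t) := by
        gcongr with t
        simpa only [logDet, hV t] using
          min_one_le_two_mul_log_det_sub_log_det (hpos t.isLt.le) (x t)
    _ = 2 * (logDet T - logDet 0) := by
        rw [← mul_sum, Fin.sum_univ_eq_sum_range (fun t => logDet (t + 1) - logDet t),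
          sum_range_sub]
    _ = 2 * Real.log ((V T).det / (V 0).det) := by
        rw [Real.log_div (hpos le_rfl).det_pos.ne' hV₀.det_pos.ne']

end RankOneUpdate

section DesignMatrix

variable {N T : ℕ} (Λ : Matrix (Fin N) (Fin N) ℝ) (x : Fin T → Fin N → ℝ)

lemma designMatrix_zero : designMatrix N T Λ x 0 = Λ := by
  simp [designMatrix]

lemma designMatrix_succ (t : Fin T) :
    designMatrix N T Λ x (t + 1) = designMatrix N T Λ x t + vecMulVec (x t) (x t) := by
  have hfilter : univ.filter (fun τ : Fin T => (τ : ℕ) < t + 1) =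
      insert t (univ.filter fun τ : Fin T => (τ : ℕ) < t) := by
    ext τ
    simp only [mem_filter_univ, mem_insert, Fin.ext_iff]
    omega
  rw [designMatrix, designMatrix, hfilter, sum_insert (by simp), add_left_comm, add_comm]

end DesignMatrix

/-- **Elliptical potential inequality.**
For a symmetric positive definite `Λ` and any `x_1, …, x_T ∈ ℝ^N`, with
`V_0 = Λ` and `V_t = V_{t-1} + x_t x_tᵀ`, one has
`∑_{t=1}^T min(1, x_tᵀ V_{t-1}⁻¹ x_t) ≤ 2 log (det V_T / det Λ)`. -/
theorem elliptical_potential_inequality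
    (N T : ℕ)
    (Λ : Matrix (Fin N) (Fin N) ℝ)
    (hΛ : Λ.PosDef)
    (x : Fin T → Fin N → ℝ) :
    ∑ t : Fin T,
        min 1 (x t ⬝ᵥ (designMatrix N T Λ x (t : ℕ))⁻¹ *ᵥ x t)
      ≤ 2 * Real.log ((designMatrix N T Λ x T).det / Λ.det) := by
  simpa only [designMatrix_zero] using elliptical_potential_inequality_general
    (by rwa [designMatrix_zero]) (designMatrix_succ Λ x)
end
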